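/- arXiv:0811.3832 — 2 statements merged into one kernel-verified Lean document; each statement's English description precedes it below -/
import Mathlib

section
/- Let r ≥ 1 be an integer. A set A ⊆ ℤ² is a maximal anticode of hexagonal diameter r if and only if A is a translate of the set A_i = {(x,y) ∈ ℤ² : 0 ≤ x ≤ r, 0 ≤ y ≤ r, x−i ≤ y ≤ x−i+r} for some integer i with 0 ≤ i ≤ r. -/
/-- Hexagonal (grid) distance on ℤ²: the graph distance in the hexagonal grid, where
`(i,j)` is adjacent to `(i±1,j)`, `(i,j±1)`, `(i+1,j+1)` and `(i−1,j−1)`. -/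
def hdist (p q : ℤ × ℤ) : ℤ :=
  if 0 ≤ (q.1 - p.1) * (q.2 - p.2) then max |q.1 - p.1| |q.2 - p.2|
  else |q.1 - p.1| + |q.2 - p.2|

/-- `A` is a maximal anticode of hexagonal diameter `r`. -/
def IsMaxAnticodeHex (A : Set (ℤ × ℤ)) (r : ℤ) : Prop :=
  (∀ p ∈ A, ∀ q ∈ A, hdist p q ≤ r) ∧
  ∀ p : ℤ × ℤ, p ∉ A → ∃ q ∈ A, r < hdist p q

/-! The hexagonal distance is the largest absolute difference in the three coordinates `x`, `y` and
`y - x`. So on an anticode of diameter `r` each coordinate ranges over an interval of length `r`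
starting at its minimum, and the anticode lies in the hexagon cut out by these three strips. That
hexagon is itself an anticode, hence equal to the given one if that is maximal; attained minima are
what gives `0 ≤ i ≤ r`. Conversely, `0 ≤ i ≤ r` makes every side of the hexagon contain one of its
points, so a point within distance `r` of the whole hexagon cannot lie beyond any side. -/

open Set

theorem hdist_eq_max (p q : ℤ × ℤ) :
    hdist p q = max (max |q.1 - p.1| |q.2 - p.2|) |(q.2 - q.1) - (p.2 - p.1)| := by
  have diff_eq : (q.2 - q.1) - (p.2 - p.1) = (q.2 - p.2) - (q.1 - p.1) := by ring
  rw [hdist, diff_eq]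
  generalize q.1 - p.1 = dx
  generalize q.2 - p.2 = dy
  split_ifs with h
  · rcases mul_nonneg_iff.1 h with ⟨_, _⟩ | ⟨_, _⟩ <;> grind
  · rcases mul_neg_iff.1 (not_le.1 h) with ⟨_, _⟩ | ⟨_, _⟩ <;> grind

theorem hdist_le_iff {p q : ℤ × ℤ} {r : ℤ} :
    hdist p q ≤ r ↔
      |q.1 - p.1| ≤ r ∧ |q.2 - p.2| ≤ r ∧ |(q.2 - q.1) - (p.2 - p.1)| ≤ r := by
  rw [hdist_eq_max, max_le_iff, max_le_iff, and_assoc]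

theorem exists_mem_forall_apply_mem_Icc {α : Type*} {A : Set α} {r : ℤ} (f : α → ℤ)
    (hne : A.Nonempty) (hf : ∀ p ∈ A, ∀ q ∈ A, |f q - f p| ≤ r) :
    ∃ p ∈ A, ∀ q ∈ A, f q ∈ Icc (f p) (f p + r) := by
  have bddBelow : BddBelow (f '' A) := by
    obtain ⟨p₀, hp₀⟩ := hne
    refine ⟨f p₀ - r, forall_mem_image.2 fun q hq => ?_⟩
    linarith [neg_le_of_abs_le (hf p₀ hp₀ q hq)]
  obtain ⟨p, hp, p_min⟩ := Int.csInf_mem (hne.image f) bddBelow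
  refine ⟨p, hp, fun q hq => ⟨p_min ▸ csInf_le bddBelow (mem_image_of_mem f hq), ?_⟩⟩
  linarith [le_of_abs_le (hf p hp q hq)]

/-- Anticodes of hexagonal diameter at most `r`, not necessarily maximal: the first half of
`IsMaxAnticodeHex`. -/
def IsAnticodeHex (A : Set (ℤ × ℤ)) (r : ℤ) : Prop :=
  ∀ p ∈ A, ∀ q ∈ A, hdist p q ≤ r

/-- The intersection of the three strips of width `r` on which `x`, `y` and `y - x` start at `a`,
`b` and `c`. The translate of the anticode `A_i` by `(a, b)` is the case `c = b - a - i`, and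
`0 ≤ i ≤ r` becomes `b - a ∈ Set.Icc c (c + r)`. -/
def hexagon (r a b c : ℤ) : Set (ℤ × ℤ) :=
  {p | p.1 ∈ Icc a (a + r) ∧ p.2 ∈ Icc b (b + r) ∧ p.2 - p.1 ∈ Icc c (c + r)}

theorem mem_hexagon {r a b c : ℤ} {p : ℤ × ℤ} :
    p ∈ hexagon r a b c ↔
      p.1 ∈ Icc a (a + r) ∧ p.2 ∈ Icc b (b + r) ∧ p.2 - p.1 ∈ Icc c (c + r) :=
  Iff.rfl

theorem setOf_eq_hexagon (r a b i : ℤ) :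
    {p : ℤ × ℤ | 0 ≤ p.1 - a ∧ p.1 - a ≤ r ∧ 0 ≤ p.2 - b ∧ p.2 - b ≤ r ∧
      (p.1 - a) - i ≤ p.2 - b ∧ p.2 - b ≤ (p.1 - a) - i + r} = hexagon r a b (b - a - i) := by
  ext p
  simp only [mem_hexagon, mem_ofPred_eq, mem_Icc]
  omega

theorem isAnticodeHex_hexagon (r a b c : ℤ) : IsAnticodeHex (hexagon r a b c) r := by
  intro p hp q hq
  simp only [mem_hexagon, mem_Icc] at hp hq
  simp only [hdist_le_iff, abs_le]
  omega

theorem IsAnticodeHex.exists_subset_hexagon {A : Set (ℤ × ℤ)} {r : ℤ} (hA : IsAnticodeHex A r)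
    (hne : A.Nonempty) : ∃ a b c : ℤ, b - a ∈ Icc c (c + r) ∧ A ⊆ hexagon r a b c := by
  obtain ⟨u, -, hx⟩ := exists_mem_forall_apply_mem_Icc Prod.fst hne
    fun p hp q hq => (hdist_le_iff.1 (hA p hp q hq)).1
  obtain ⟨v, hv, hy⟩ := exists_mem_forall_apply_mem_Icc Prod.snd hne
    fun p hp q hq => (hdist_le_iff.1 (hA p hp q hq)).2.1
  obtain ⟨w, hw, hyx⟩ := exists_mem_forall_apply_mem_Icc (fun p : ℤ × ℤ => p.2 - p.1) hne
    fun p hp q hq => (hdist_le_iff.1 (hA p hp q hq)).2.2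
  have hsub : A ⊆ hexagon r u.1 v.2 (w.2 - w.1) := fun p hp =>
    mem_hexagon.2 ⟨hx p hp, hy p hp, hyx p hp⟩
  refine ⟨u.1, v.2, w.2 - w.1, ?_, hsub⟩
  have hv_mem := hsub hv
  have hw_mem := hsub hw
  simp only [mem_hexagon, mem_Icc] at hv_mem hw_mem ⊢
  omega

theorem IsMaxAnticodeHex.nonempty {A : Set (ℤ × ℤ)} {r : ℤ} (hA : IsMaxAnticodeHex A r) :
    A.Nonempty := by
  by_contra hempty
  obtain ⟨q, hq, -⟩ := hA.2 0 fun h => hempty ⟨0, h⟩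
  exact hempty ⟨q, hq⟩

theorem IsMaxAnticodeHex.eq_of_subset {A B : Set (ℤ × ℤ)} {r : ℤ} (hA : IsMaxAnticodeHex A r)
    (hB : IsAnticodeHex B r) (hAB : A ⊆ B) : A = B := by
  refine hAB.antisymm fun p hp => by_contra fun hpA => ?_
  obtain ⟨q, hq, hlt⟩ := hA.2 p hpA
  exact (hB p hp q (hAB hq)).not_gt hlt

theorem mem_hexagon_of_forall_hdist_le {r a b c : ℤ} (hc : b - a ∈ Icc c (c + r))
    {p : ℤ × ℤ} (hp : ∀ q ∈ hexagon r a b c, hdist p q ≤ r) : p ∈ hexagon r a b c := by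
  simp only [mem_hexagon, mem_Icc, hdist_le_iff, abs_le] at hc hp ⊢
  -- The first two vertices bound `x` and `y`, the last two bound `y - x`.
  have lower_left := hp (a, b) (by omega)
  have upper_right := hp (a + r, b + r) (by omega)
  have upper_left := hp (a, a + c + r) (by omega)
  have lower_right := hp (b - c, b) (by omega)
  omega

theorem isMaxAnticodeHex_hexagon {r a b c : ℤ} (hc : b - a ∈ Icc c (c + r)) :
    IsMaxAnticodeHex (hexagon r a b c) r := by
  refine ⟨isAnticodeHex_hexagon r a b c, fun p hp => ?_⟩
  contrapose! hp
  exact mem_hexagon_of_forall_hdist_le hc hp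

/-- For `r ≥ 1`, the maximal anticodes of hexagonal diameter `r` in ℤ² are exactly the
translates of the anticodes `A_i = {(x,y) : 0 ≤ x ≤ r, 0 ≤ y ≤ r, x−i ≤ y ≤ x−i+r}`
for `0 ≤ i ≤ r`. -/
theorem stmt_2 (r : ℤ) (hr : 1 ≤ r) (A : Set (ℤ × ℤ)) :
    IsMaxAnticodeHex A r ↔
      ∃ a b i : ℤ, 0 ≤ i ∧ i ≤ r ∧
        A = {p : ℤ × ℤ | 0 ≤ p.1 - a ∧ p.1 - a ≤ r ∧ 0 ≤ p.2 - b ∧ p.2 - b ≤ r ∧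
              (p.1 - a) - i ≤ p.2 - b ∧ p.2 - b ≤ (p.1 - a) - i + r} := by
  constructor
  · intro hA
    obtain ⟨a, b, c, ⟨hc, hcr⟩, hsub⟩ := IsAnticodeHex.exists_subset_hexagon hA.1 hA.nonempty
    refine ⟨a, b, b - a - c, sub_nonneg.2 hc, sub_le_iff_le_add'.2 hcr, ?_⟩
    rw [setOf_eq_hexagon, sub_sub_cancel]
    exact hA.eq_of_subset (isAnticodeHex_hexagon r a b c) hsub
  · rintro ⟨a, b, i, hi, hir, rfl⟩
    rw [setOf_eq_hexagon]
    exact isMaxAnticodeHex_hexagon ⟨by linarith, by linarith⟩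
end

section
/- There is a constant C > 0 such that for every positive integer r, every distinct difference configuration D ⊆ ℤ² whose points have pairwise Euclidean distance at most r satisfies |D| ≤ (√π/2)·r + C·r^(2/3). -/
/-- Euclidean distance on ℝ². -/
noncomputable def edist2 (x y : ℝ × ℝ) : ℝ := Real.sqrt ((y.1 - x.1) ^ 2 + (y.2 - x.2) ^ 2)

/-- The embedding of ℤ² in ℝ². -/
def toR2 (p : ℤ × ℤ) : ℝ × ℝ := ((p.1 : ℝ), (p.2 : ℝ))

/-- A set of points is a distinct difference configuration if all differences between
distinct pairs of its points are distinct. -/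
def IsDDC {G : Type*} [Sub G] (D : Set G) : Prop :=
  ∀ p₁ ∈ D, ∀ p₂ ∈ D, ∀ q₁ ∈ D, ∀ q₂ ∈ D,
    p₂ - p₁ = q₂ - q₁ → p₂ ≠ p₁ → p₁ = q₁ ∧ p₂ = q₂

/-!
Let `S` be a `k × k` square of lattice points. Since differences of a distinct difference
configuration `D` never repeat, the additive energy of `D` and `S` is at most `|D||S| + |S|²`, so
Cauchy–Schwarz gives `|D|² |S| ≤ |D + S| (|D| + |S|)`. On the other hand `D + S` has diameter at
most `r + 2(k - 1)`, and the isodiametric inequality bounds the number of lattice points in a set of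
diameter `d` by `(π / 4) (d + 2)²`. Together these give
`|D| ≤ (√π / 2) (r + 2k) + O((r + k)² / k²)`, and `k ≈ r ^ (2 / 3)` balances the error terms.

For the isodiametric inequality, place a leftmost point of the set at the origin. Points of the set
in two perpendicular directions at distances `x` and `y` from the origin satisfy `x² + y² ≤ d²`, so
the polar area densities in the directions `θ` and `θ - π / 2` add up to at most `d² / 2`; the set
occupies a half-plane, so integrating over `0 ≤ θ ≤ π / 2` covers it.
-/

open MeasureTheory Set
open scoped ENNReal Pointwise Combinatorics.Additive

section Isodiametric

theorem setLIntegral_ofReal_eq_zero_of_subset_Iic {U : Set ℝ} (hU : U ⊆ Iic 0) :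
    ∫⁻ x in U, ENNReal.ofReal x = 0 :=
  nonpos_iff_eq_zero.mp <| (lintegral_mono_set hU).trans_eq <|
    setLIntegral_eq_zero measurableSet_Iic fun _ hx ↦ ENNReal.ofReal_of_nonpos hx

theorem setLIntegral_ofReal_le_of_forall_sq_le {U : Set ℝ} {s : ℝ} (hU : ∀ x ∈ U, x ^ 2 ≤ s) :
    ∫⁻ x in U, ENNReal.ofReal x ≤ ENNReal.ofReal (s / 2) := by
  rcases U.eq_empty_or_nonempty with rfl | ⟨x₀, hx₀⟩
  · simp
  have hs : 0 ≤ s := (sq_nonneg x₀).trans (hU x₀ hx₀)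
  have hsub : U ⊆ Iic 0 ∪ Ioc 0 (√s) := fun x hx ↦
    (le_or_gt x 0).imp id fun hpos ↦ ⟨hpos, Real.le_sqrt_of_sq_le (hU x hx)⟩
  have hpos : ∫⁻ x in Ioc 0 (√s), ENNReal.ofReal x = ENNReal.ofReal (s / 2) := by
    have hnonneg : ∀ᵐ x ∂volume.restrict (Ioc 0 (√s)), 0 ≤ x :=
      (ae_restrict_mem measurableSet_Ioc).mono fun x hx ↦ hx.1.le
    rw [← ofReal_integral_eq_lintegral_ofReal continuous_id'.integrableOn_Ioc hnonneg,
      ← intervalIntegral.integral_of_le (Real.sqrt_nonneg s), integral_id, Real.sq_sqrt hs]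
    simp
  calc ∫⁻ x in U, ENNReal.ofReal x
      ≤ ∫⁻ x in Iic 0 ∪ Ioc 0 (√s), ENNReal.ofReal x := lintegral_mono_set hsub
    _ ≤ (∫⁻ x in Iic 0, ENNReal.ofReal x) + ∫⁻ x in Ioc 0 (√s), ENNReal.ofReal x :=
        lintegral_union_le _ _ _
    _ = ENNReal.ofReal (s / 2) := by
        rw [setLIntegral_ofReal_eq_zero_of_subset_Iic subset_rfl, hpos, zero_add]

theorem setLIntegral_ofReal_add_le_of_forall_sq_add_sq_le {U V : Set ℝ} {s : ℝ}
    (hU : U.Nonempty) (hV : V.Nonempty) (hUV : ∀ x ∈ U, ∀ y ∈ V, x ^ 2 + y ^ 2 ≤ s) :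
    (∫⁻ x in U, ENNReal.ofReal x) + ∫⁻ y in V, ENNReal.ofReal y ≤ ENNReal.ofReal (s / 2) := by
  obtain ⟨x₀, hx₀⟩ := hU
  obtain ⟨y₀, hy₀⟩ := hV
  have hI : ∀ y ∈ V, ∫⁻ x in U, ENNReal.ofReal x ≤ ENNReal.ofReal ((s - y ^ 2) / 2) := fun y hy ↦
    setLIntegral_ofReal_le_of_forall_sq_le fun x hx ↦ le_sub_right_of_add_le (hUV x hx y hy)
  have hI_top : ∫⁻ x in U, ENNReal.ofReal x ≠ ∞ :=
    ne_top_of_le_ne_top ENNReal.ofReal_ne_top (hI y₀ hy₀)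
  lift ∫⁻ x in U, ENNReal.ofReal x to NNReal using hI_top with u hu
  have hy_sq : ∀ y ∈ V, y ^ 2 ≤ s - 2 * u := fun y hy ↦ by
    have hle : (u : ℝ) ≤ (s - y ^ 2) / 2 := by
      have hnonneg : 0 ≤ (s - y ^ 2) / 2 := by linarith [hUV x₀ hx₀ y hy, sq_nonneg x₀]
      simpa using ENNReal.toReal_le_of_le_ofReal hnonneg (hI y hy)
    linarith
  calc (u : ℝ≥0∞) + ∫⁻ y in V, ENNReal.ofReal y
      ≤ ENNReal.ofReal u + ENNReal.ofReal ((s - 2 * u) / 2) := by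
        rw [ENNReal.ofReal_coe_nnreal]
        gcongr
        exact setLIntegral_ofReal_le_of_forall_sq_le hy_sq
    _ = ENNReal.ofReal (s / 2) := by
        rw [← ENNReal.ofReal_add u.coe_nonneg
          (by linarith [hy_sq y₀ hy₀, sq_nonneg y₀])]
        congr 1
        ring

/-- The signed distances from the origin at which the line in direction `θ` meets `A`. -/
def lineSlice (A : Set ℂ) (θ : ℝ) : Set ℝ :=
  {x | Complex.polarCoord.symm (x, θ) ∈ A}

/-- The density, with respect to the angle `θ`, of the area of `A` in polar coordinates. Negative
members of `lineSlice A θ` do not contribute, because `ENNReal.ofReal` vanishes there. -/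
noncomputable def sectorDensity (A : Set ℂ) (θ : ℝ) : ℝ≥0∞ :=
  ∫⁻ x in lineSlice A θ, ENNReal.ofReal x

variable {A : Set ℂ}

theorem measurable_complex_polarCoord_symm : Measurable Complex.polarCoord.symm := by
  simp only [funext Complex.polarCoord_symm_apply]
  fun_prop

theorem measurableSet_lineSlice (hA : MeasurableSet A) (θ : ℝ) : MeasurableSet (lineSlice A θ) :=
  (measurable_complex_polarCoord_symm.comp measurable_prodMk_right) hA

theorem sectorDensity_eq_lintegral_indicator (hA : MeasurableSet A) (θ : ℝ) :
    sectorDensity A θ =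
      ∫⁻ x, ENNReal.ofReal x * A.indicator 1 (Complex.polarCoord.symm (x, θ)) := by
  rw [sectorDensity, ← lintegral_indicator (measurableSet_lineSlice hA θ)]
  congr 1 with x
  classical
  simp only [lineSlice, indicator_apply, mem_ofPred_eq, Pi.one_apply, mul_ite, mul_one, mul_zero]

theorem measurable_ofReal_fst_mul_indicator_polarCoord_symm (hA : MeasurableSet A) :
    Measurable fun p : ℝ × ℝ ↦
      ENNReal.ofReal p.1 * A.indicator (1 : ℂ → ℝ≥0∞) (Complex.polarCoord.symm p) :=
  measurable_fst.ennreal_ofReal.mul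
    ((measurable_one.indicator hA).comp measurable_complex_polarCoord_symm)

theorem measurable_sectorDensity (hA : MeasurableSet A) : Measurable (sectorDensity A) := by
  simp only [funext (sectorDensity_eq_lintegral_indicator hA)]
  exact (measurable_ofReal_fst_mul_indicator_polarCoord_symm hA).lintegral_prod_left'

theorem volume_eq_lintegral_sectorDensity (hA : MeasurableSet A) :
    volume A = ∫⁻ θ in Ioo (-Real.pi) Real.pi, sectorDensity A θ := by
  have hradial (θ : ℝ) :
      ∫⁻ x in Ioi 0, ENNReal.ofReal x * A.indicator 1 (Complex.polarCoord.symm (x, θ)) =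
        sectorDensity A θ := by
    rw [sectorDensity_eq_lintegral_indicator hA]
    refine setLIntegral_eq_of_support_subset fun x hx ↦ ?_
    exact ENNReal.ofReal_pos.mp (pos_iff_ne_zero.mpr (left_ne_zero_of_mul hx))
  rw [← lintegral_indicator_one hA, ← Complex.lintegral_comp_polarCoord_symm, polarCoord_target,
    Measure.volume_eq_prod]
  simp only [smul_eq_mul]
  rw [setLIntegral_prod_symm _
    (measurable_ofReal_fst_mul_indicator_polarCoord_symm hA).aemeasurable]
  simp only [hradial]

theorem re_polarCoord_symm (x θ : ℝ) :
    (Complex.polarCoord.symm (x, θ)).re = x * Real.cos θ := by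
  simp [-Complex.ofReal_cos, -Complex.ofReal_sin]

theorem im_polarCoord_symm (x θ : ℝ) :
    (Complex.polarCoord.symm (x, θ)).im = x * Real.sin θ := by
  simp [-Complex.ofReal_cos, -Complex.ofReal_sin]

theorem dist_polarCoord_symm_sub_pi_div_two_sq (x y θ : ℝ) :
    dist (Complex.polarCoord.symm (x, θ)) (Complex.polarCoord.symm (y, θ - Real.pi / 2)) ^ 2 =
      x ^ 2 + y ^ 2 := by
  rw [Complex.dist_eq, Complex.sq_norm, Complex.normSq_apply]
  simp only [Complex.sub_re, Complex.sub_im, re_polarCoord_symm, im_polarCoord_symm,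
    Real.cos_sub_pi_div_two, Real.sin_sub_pi_div_two]
  linear_combination (x ^ 2 + y ^ 2) * Real.sin_sq_add_cos_sq θ

theorem sectorDensity_add_sectorDensity_sub_pi_div_two_le {d : ℝ} (h0 : 0 ∈ A)
    (hd : ∀ a ∈ A, ∀ b ∈ A, dist a b ≤ d) (θ : ℝ) :
    sectorDensity A θ + sectorDensity A (θ - Real.pi / 2) ≤ ENNReal.ofReal (d ^ 2 / 2) := by
  have hzero (φ : ℝ) : (lineSlice A φ).Nonempty := ⟨0, by simpa [lineSlice] using h0⟩
  refine setLIntegral_ofReal_add_le_of_forall_sq_add_sq_le (hzero _) (hzero _) fun x hx y hy ↦ ?_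
  rw [← dist_polarCoord_symm_sub_pi_div_two_sq x y θ]
  gcongr
  exact hd _ hx _ hy

theorem sectorDensity_eq_zero_of_cos_neg (hre : ∀ a ∈ A, 0 ≤ a.re) {θ : ℝ}
    (hθ : Real.cos θ < 0) : sectorDensity A θ = 0 := by
  have hsub : lineSlice A θ ⊆ Iic 0 := fun x hx ↦ by
    have hxcos : 0 ≤ x * Real.cos θ := re_polarCoord_symm x θ ▸ hre _ hx
    exact nonpos_of_mul_nonneg_left hxcos hθ
  exact setLIntegral_ofReal_eq_zero_of_subset_Iic hsub

theorem volume_le_lintegral_sectorDensity_of_re_nonneg (hA : MeasurableSet A)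
    (hre : ∀ a ∈ A, 0 ≤ a.re) :
    volume A ≤ ∫⁻ θ in Icc 0 (Real.pi / 2),
      (sectorDensity A θ + sectorDensity A (θ - Real.pi / 2)) := by
  have hcover : Ioo (-Real.pi) Real.pi ⊆
      (Icc 0 (Real.pi / 2) ∪ Icc (-(Real.pi / 2)) 0) ∪ {θ | Real.cos θ < 0} := by
    rintro θ ⟨hlo, hhi⟩
    by_contra! hθ
    simp only [mem_union, mem_Icc, mem_ofPred_eq, not_or, not_and, not_le, not_lt] at hθ
    obtain ⟨⟨hpos, hneg⟩, hcos⟩ := hθ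
    rcases le_total 0 θ with h | h
    · exact hcos.not_gt (Real.cos_neg_of_pi_div_two_lt_of_lt (hpos h) (by linarith))
    · have hlt : θ < -(Real.pi / 2) := by
        by_contra! hge
        exact h.not_gt (hneg hge)
      rw [← Real.cos_neg] at hcos
      exact hcos.not_gt (Real.cos_neg_of_pi_div_two_lt_of_lt (by linarith) (by linarith))
  have hrotate : ∫⁻ θ in Icc (-(Real.pi / 2)) 0, sectorDensity A θ =
      ∫⁻ θ in Icc 0 (Real.pi / 2), sectorDensity A (θ - Real.pi / 2) := by
    rw [← (measurePreserving_sub_right volume (Real.pi / 2)).setLIntegral_comp_preimage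
      measurableSet_Icc (measurable_sectorDensity hA)]
    simp
  have hleft : ∫⁻ θ in {θ | Real.cos θ < 0}, sectorDensity A θ = 0 :=
    setLIntegral_eq_zero (measurableSet_lt Real.measurable_cos measurable_const)
      fun θ hθ ↦ sectorDensity_eq_zero_of_cos_neg hre hθ
  calc volume A = ∫⁻ θ in Ioo (-Real.pi) Real.pi, sectorDensity A θ :=
        volume_eq_lintegral_sectorDensity hA
    _ ≤ (∫⁻ θ in Icc 0 (Real.pi / 2), sectorDensity A θ) +
          (∫⁻ θ in Icc (-(Real.pi / 2)) 0, sectorDensity A θ) +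
          ∫⁻ θ in {θ | Real.cos θ < 0}, sectorDensity A θ :=
        (lintegral_mono_set hcover).trans <| (lintegral_union_le _ _ _).trans <|
          add_le_add_left (lintegral_union_le _ _ _) _
    _ = ∫⁻ θ in Icc 0 (Real.pi / 2),
          (sectorDensity A θ + sectorDensity A (θ - Real.pi / 2)) := by
        rw [hleft, add_zero, hrotate, lintegral_add_left (measurable_sectorDensity hA)]

theorem volume_le_of_zero_mem_of_re_nonneg {d : ℝ} (hA : MeasurableSet A) (h0 : 0 ∈ A)
    (hre : ∀ a ∈ A, 0 ≤ a.re) (hd : ∀ a ∈ A, ∀ b ∈ A, dist a b ≤ d) :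
    volume A ≤ ENNReal.ofReal (Real.pi / 4 * d ^ 2) :=
  calc volume A
      ≤ ∫⁻ θ in Icc 0 (Real.pi / 2),
          (sectorDensity A θ + sectorDensity A (θ - Real.pi / 2)) :=
        volume_le_lintegral_sectorDensity_of_re_nonneg hA hre
    _ ≤ ∫⁻ _ in Icc 0 (Real.pi / 2), ENNReal.ofReal (d ^ 2 / 2) :=
        lintegral_mono fun θ ↦ sectorDensity_add_sectorDensity_sub_pi_div_two_le h0 hd θ
    _ = ENNReal.ofReal (Real.pi / 4 * d ^ 2) := by
        rw [setLIntegral_const, Real.volume_Icc, ← ENNReal.ofReal_mul (by positivity)]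
        congr 1
        ring

theorem volume_le_of_forall_dist_le {d : ℝ} (hd : ∀ a ∈ A, ∀ b ∈ A, dist a b ≤ d) :
    volume A ≤ ENNReal.ofReal (Real.pi / 4 * d ^ 2) := by
  rcases A.eq_empty_or_nonempty with rfl | hA
  · simp
  have hcompact : IsCompact (closure A) :=
    (Metric.isBounded_iff.mpr ⟨d, fun a ha b hb ↦ hd a ha b hb⟩).isCompact_closure
  obtain ⟨o, ho, hmin⟩ := hcompact.exists_isMinOn hA.closure Complex.continuous_re.continuousOn
  have hd_closure : ∀ a ∈ closure A, ∀ b ∈ closure A, dist a b ≤ d := fun a ha b hb ↦ by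
    simpa using map_mem_closure₂ continuous_dist ha hb fun a ha b hb ↦ mem_Iic.mpr (hd a ha b hb)
  have hle : volume ((· + o) ⁻¹' closure A) ≤ ENNReal.ofReal (Real.pi / 4 * d ^ 2) := by
    refine volume_le_of_zero_mem_of_re_nonneg
      (measurable_add_const o isClosed_closure.measurableSet) (by simpa using ho)
      (fun a ha ↦ by simpa using hmin ha) fun a ha b hb ↦ ?_
    simpa using hd_closure _ ha _ hb
  rw [measure_preimage_add_right] at hle
  exact (measure_mono subset_closure).trans hle

end Isodiametric

section LatticePoints

/-- The lattice point `p` as a complex number, so that the metric and Lebesgue measure of `ℂ`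
apply to it. -/
def latticePoint (p : ℤ × ℤ) : ℂ := ⟨p.1, p.2⟩

/-- The lower left corner of the half-open unit lattice square containing `z`. -/
noncomputable def latticeFloor (z : ℂ) : ℤ × ℤ := (⌊z.re⌋, ⌊z.im⌋)

theorem dist_latticePoint (p q : ℤ × ℤ) :
    dist (latticePoint p) (latticePoint q) = edist2 (toR2 p) (toR2 q) := by
  rw [dist_comm, Complex.dist_eq_re_im]
  rfl

theorem latticePoint_add (p q : ℤ × ℤ) :
    latticePoint (p + q) = latticePoint p + latticePoint q := by
  simp [latticePoint, Complex.ext_iff]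

theorem latticeFloor_preimage_singleton (t : ℤ × ℤ) :
    latticeFloor ⁻¹' {t} = Ico (t.1 : ℝ) (t.1 + 1) ×ℂ Ico (t.2 : ℝ) (t.2 + 1) := by
  ext z
  simp [latticeFloor, Prod.ext_iff, Int.floor_eq_iff, Complex.mem_reProdIm]

theorem volume_reProdIm (s t : Set ℝ) : volume (s ×ℂ t) = volume s * volume t := by
  rw [← Measure.prod_prod, ← Measure.volume_eq_prod,
    ← Complex.volume_preserving_equiv_real_prod.measure_preimage_equiv]
  rfl

theorem volume_latticeFloor_preimage (T : Finset (ℤ × ℤ)) :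
    volume (latticeFloor ⁻¹' T) = T.card := by
  have hmeas : Measurable latticeFloor :=
    (Int.measurable_floor.comp Complex.measurable_re).prodMk
      (Int.measurable_floor.comp Complex.measurable_im)
  rw [← sum_measure_preimage_singleton T fun t _ ↦ hmeas (measurableSet_singleton t)]
  simp [latticeFloor_preimage_singleton, volume_reProdIm]

theorem dist_le_dist_latticeFloor_add_two (z w : ℂ) :
    dist z w ≤ dist (latticePoint (latticeFloor z)) (latticePoint (latticeFloor w)) + 2 := by
  set e := (z - w) - (latticePoint (latticeFloor z) - latticePoint (latticeFloor w)) with he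
  have hre : e.re = Int.fract z.re - Int.fract w.re := by
    simp only [he, latticePoint, latticeFloor, Complex.sub_re, Int.fract]
    ring
  have him : e.im = Int.fract z.im - Int.fract w.im := by
    simp only [he, latticePoint, latticeFloor, Complex.sub_im, Int.fract]
    ring
  have hfract (x y : ℝ) : |Int.fract x - Int.fract y| ≤ 1 :=
    abs_sub_le_of_nonneg_of_le (Int.fract_nonneg x) (Int.fract_lt_one x).le
      (Int.fract_nonneg y) (Int.fract_lt_one y).le
  have he_norm : ‖e‖ ≤ 2 := by
    linarith [Complex.norm_le_abs_re_add_abs_im e, hre ▸ hfract z.re w.re, him ▸ hfract z.im w.im]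
  calc dist z w = ‖latticePoint (latticeFloor z) - latticePoint (latticeFloor w) + e‖ := by
        rw [he, add_sub_cancel, dist_eq_norm]
    _ ≤ dist (latticePoint (latticeFloor z)) (latticePoint (latticeFloor w)) + 2 := by
        rw [dist_eq_norm]
        exact (norm_add_le _ _).trans (by gcongr)

theorem card_le_of_forall_dist_latticePoint_le {T : Finset (ℤ × ℤ)} {d : ℝ}
    (hd : ∀ p ∈ T, ∀ q ∈ T, dist (latticePoint p) (latticePoint q) ≤ d) :
    (T.card : ℝ) ≤ Real.pi / 4 * (d + 2) ^ 2 := by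
  have hvol : volume (latticeFloor ⁻¹' (T : Set (ℤ × ℤ))) ≤
      ENNReal.ofReal (Real.pi / 4 * (d + 2) ^ 2) :=
    volume_le_of_forall_dist_le fun z hz w hw ↦
      (dist_le_dist_latticeFloor_add_two z w).trans (by gcongr; exact hd _ hz _ hw)
  rw [volume_latticeFloor_preimage] at hvol
  simpa using ENNReal.toReal_le_of_le_ofReal (by positivity) hvol

/-- The square of lattice points `{0, …, k - 1}²`, the set with which a configuration is summed. -/
noncomputable def latticeSquare (k : ℕ) : Finset (ℤ × ℤ) :=
  Finset.Ico 0 (k : ℤ) ×ˢ Finset.Ico 0 (k : ℤ)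

theorem card_latticeSquare (k : ℕ) : (latticeSquare k).card = k ^ 2 := by
  simp [latticeSquare, sq]

theorem dist_latticePoint_le_of_mem_latticeSquare {k : ℕ} {s t : ℤ × ℤ}
    (hs : s ∈ latticeSquare k) (ht : t ∈ latticeSquare k) :
    dist (latticePoint s) (latticePoint t) ≤ 2 * (k - 1) := by
  have hcoord {a b : ℤ} (ha : 0 ≤ a ∧ a < k) (hb : 0 ≤ b ∧ b < k) : |(a : ℝ) - b| ≤ k - 1 := by
    have : |a - b| ≤ k - 1 := abs_le.mpr ⟨by lia, by lia⟩
    exact_mod_cast this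
  simp only [latticeSquare, Finset.mem_product, Finset.mem_Ico] at hs ht
  calc dist (latticePoint s) (latticePoint t)
      ≤ |(s.1 : ℝ) - t.1| + |(s.2 : ℝ) - t.2| := by
        rw [Complex.dist_eq]
        exact Complex.norm_le_abs_re_add_abs_im (latticePoint s - latticePoint t)
    _ ≤ 2 * (k - 1) := by linarith [hcoord hs.1 ht.1, hcoord hs.2 ht.2]

theorem card_add_latticeSquare_le {D : Finset (ℤ × ℤ)} {r : ℝ} (k : ℕ)
    (hr : ∀ p ∈ D, ∀ q ∈ D, dist (latticePoint p) (latticePoint q) ≤ r) :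
    ((D + latticeSquare k).card : ℝ) ≤ Real.pi / 4 * (r + 2 * k) ^ 2 := by
  have hdist : ∀ p ∈ D + latticeSquare k, ∀ q ∈ D + latticeSquare k,
      dist (latticePoint p) (latticePoint q) ≤ r + 2 * (k - 1) := by
    rintro _ hps _ hqt
    obtain ⟨p, hp, s, hs, rfl⟩ := Finset.mem_add.mp hps
    obtain ⟨q, hq, t, ht, rfl⟩ := Finset.mem_add.mp hqt
    simp only [latticePoint_add]
    exact (dist_add_add_le _ _ _ _).trans
      (add_le_add (hr p hp q hq) (dist_latticePoint_le_of_mem_latticeSquare hs ht))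
  convert card_le_of_forall_dist_latticePoint_le hdist using 3
  ring

end LatticePoints

section DistinctDifferences

namespace IsDDC

variable {G : Type*} [AddCommGroup G] [DecidableEq G] {D : Finset G}

theorem addEnergy_le (hD : IsDDC (D : Set G)) (S : Finset G) :
    E[D, S] ≤ D.card * S.card + S.card ^ 2 := by
  rw [Finset.addEnergy, ← Finset.card_filter_add_card_filter_not fun x ↦ x.1.1 = x.1.2, sq,
    ← Finset.card_product, ← Finset.card_product]
  -- A solution of `a + s = b + t` is determined by `(a, s)` if `a = b`, and by `(s, t)` otherwise,
  -- because then `s - t` is the difference of a unique pair `(b, a)` of points of `D`.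
  refine add_le_add
    (Finset.card_le_card_of_injOn (fun x ↦ (x.1.1, x.2.1)) (by grind [Set.MapsTo]) ?_)
    (Finset.card_le_card_of_injOn Prod.snd (by grind [Set.MapsTo]) ?_)
  · rintro ⟨⟨a, b⟩, s, t⟩ h ⟨⟨a', b'⟩, s', t'⟩ h' heq
    grind
  · rintro ⟨⟨a, b⟩, s, t⟩ h ⟨⟨a', b'⟩, s', t'⟩ h' ⟨rfl, rfl⟩
    simp only [Finset.coe_filter, Finset.mem_filter, Finset.mem_product, mem_ofPred_eq] at h h'
    obtain ⟨⟨⟨⟨ha, hb⟩, -⟩, hsum⟩, hne⟩ := h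
    obtain ⟨⟨⟨⟨ha', hb'⟩, -⟩, hsum'⟩, -⟩ := h'
    have hdiff : b - a = b' - a' := by grind
    obtain ⟨rfl, rfl⟩ := hD a ha b hb a' ha' b' hb' hdiff (Ne.symm hne)
    rfl

theorem card_sq_mul_card_le (hD : IsDDC (D : Set G)) (S : Finset G) :
    D.card ^ 2 * S.card ≤ (D + S).card * (D.card + S.card) := by
  rcases S.card.eq_zero_or_pos with hS | hS
  · simp [hS]
  refine Nat.le_of_mul_le_mul_right ?_ hS
  calc D.card ^ 2 * S.card * S.card = D.card ^ 2 * S.card ^ 2 := by ring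
    _ ≤ (D + S).card * E[D, S] := Finset.le_card_add_mul_addEnergy D S
    _ ≤ (D + S).card * (D.card * S.card + S.card ^ 2) := by gcongr; exact hD.addEnergy_le S
    _ = (D + S).card * (D.card + S.card) * S.card := by ring

end IsDDC

theorem le_add_sq_div_of_sq_mul_le {m n M : ℝ} (hn : 0 < n) (hM : 0 ≤ M)
    (h : m ^ 2 * n ≤ M ^ 2 * (m + n)) : m ≤ M + M ^ 2 / n := by
  have hquad : m ^ 2 ≤ M ^ 2 + M ^ 2 / n * m := by
    rw [← le_div_iff₀ hn] at h
    exact h.trans_eq (by field_simp; ring)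
  have hQ : 0 ≤ M ^ 2 / n := by positivity
  by_contra! hlt
  nlinarith

theorem sqrt_pi_div_two_sq : (√Real.pi / 2) ^ 2 = Real.pi / 4 := by
  rw [div_pow, Real.sq_sqrt Real.pi_pos.le]
  norm_num

theorem IsDDC.card_le_of_forall_dist_le {D : Finset (ℤ × ℤ)} (hD : IsDDC (D : Set (ℤ × ℤ)))
    {r : ℝ} (hr : 0 ≤ r) (hdist : ∀ p ∈ D, ∀ q ∈ D, dist (latticePoint p) (latticePoint q) ≤ r)
    {k : ℕ} (hk : 0 < k) :
    (D.card : ℝ) ≤ √Real.pi / 2 * (r + 2 * k) + (√Real.pi / 2 * (r + 2 * k)) ^ 2 / k ^ 2 := by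
  refine le_add_sq_div_of_sq_mul_le (by positivity) (by positivity) ?_
  have henergy : (D.card : ℝ) ^ 2 * k ^ 2 ≤ (D + latticeSquare k).card * (D.card + k ^ 2) := by
    have := hD.card_sq_mul_card_le (latticeSquare k)
    rw [card_latticeSquare] at this
    exact_mod_cast this
  calc (D.card : ℝ) ^ 2 * k ^ 2 ≤ (D + latticeSquare k).card * (D.card + k ^ 2) := henergy
    _ ≤ (√Real.pi / 2 * (r + 2 * k)) ^ 2 * (D.card + k ^ 2) := by
        rw [mul_pow, sqrt_pi_div_two_sq]
        gcongr
        exact card_add_latticeSquare_le k hdist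

theorem sqrt_pi_div_two_mul_add_sq_div_le {r k : ℝ} (hr : 1 ≤ r) (hk : r ^ ((2 : ℝ) / 3) ≤ k)
    (hk' : k ≤ 2 * r ^ ((2 : ℝ) / 3)) :
    √Real.pi / 2 * (r + 2 * k) + (√Real.pi / 2 * (r + 2 * k)) ^ 2 / k ^ 2 ≤
      √Real.pi / 2 * r + 29 * r ^ ((2 : ℝ) / 3) := by
  set q := r ^ ((2 : ℝ) / 3) with hq
  have hq_pos : 0 < q := by positivity
  have hk_pos : 0 < k := hq_pos.trans_le hk
  have hq_cube : q ^ 3 = r ^ 2 := by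
    rw [hq, ← Real.rpow_natCast, ← Real.rpow_mul (by positivity)]
    norm_num
  have hq_le : q ≤ r := Real.rpow_le_self_of_one_le hr (by norm_num)
  have hpi : √Real.pi / 2 ≤ 1 := by
    rw [div_le_one two_pos, Real.sqrt_le_left two_pos.le]
    linarith [Real.pi_le_four]
  have hmain : √Real.pi / 2 * (r + 2 * k) ≤ √Real.pi / 2 * r + 4 * q := by
    nlinarith [Real.sqrt_nonneg Real.pi]
  have herror : (√Real.pi / 2 * (r + 2 * k)) ^ 2 / k ^ 2 ≤ 25 * q :=
    calc (√Real.pi / 2 * (r + 2 * k)) ^ 2 / k ^ 2 ≤ (1 * (r + 4 * r)) ^ 2 / q ^ 2 := by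
          gcongr (?_ * (r + ?_)) ^ 2 / ?_ ^ 2
          linarith
      _ = 25 * q := by
          rw [div_eq_iff (by positivity)]
          linear_combination -25 * hq_cube
  linarith

end DistinctDifferences

theorem stmt_11_general {r : ℝ} (hr : 1 ≤ r) {D : Finset (ℤ × ℤ)}
    (hD : IsDDC (D : Set (ℤ × ℤ))) (hdist : ∀ p ∈ D, ∀ q ∈ D, edist2 (toR2 p) (toR2 q) ≤ r) :
    (D.card : ℝ) ≤ √Real.pi / 2 * r + 29 * r ^ ((2 : ℝ) / 3) := by
  have hpow : 1 ≤ r ^ ((2 : ℝ) / 3) := Real.one_le_rpow hr (by norm_num)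
  have hceil : (⌈r ^ ((2 : ℝ) / 3)⌉₊ : ℝ) ≤ 2 * r ^ ((2 : ℝ) / 3) := by
    linarith [Nat.ceil_lt_add_one (zero_le_one.trans hpow)]
  have hcard := hD.card_le_of_forall_dist_le (zero_le_one.trans hr)
    (by simpa only [dist_latticePoint] using hdist) (Nat.ceil_pos.mpr (zero_lt_one.trans_le hpow))
  exact hcard.trans (sqrt_pi_div_two_mul_add_sq_div_le hr (Nat.le_ceil _) hceil)

/-- Upper bound for `DD(m,r)`: every distinct difference configuration in ℤ² with pairwise
Euclidean distance at most `r` has at most `(√π/2)·r + C·r^(2/3)` dots. -/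
theorem stmt_11 :
    ∃ C : ℝ, 0 < C ∧ ∀ r : ℕ, 0 < r → ∀ D : Finset (ℤ × ℤ), IsDDC (D : Set (ℤ × ℤ)) →
      (∀ p ∈ D, ∀ q ∈ D, edist2 (toR2 p) (toR2 q) ≤ (r : ℝ)) →
      (D.card : ℝ) ≤ Real.sqrt Real.pi / 2 * (r : ℝ) + C * (r : ℝ) ^ ((2 : ℝ) / 3) := by
  exact ⟨29, by norm_num, fun r hr D hD hdist ↦ stmt_11_general (mod_cast hr) hD hdist⟩
end
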